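/- arXiv:dg-ga/9608003 — 3 statements merged into one kernel-verified Lean document; each statement's English description precedes it below -/
import Mathlib

section
/- Let φ : EuclideanSpace ℝ (Fin m) → EuclideanSpace ℂ (Fin n) be a pseudo harmonic morphism (C², harmonic, and pseudo horizontally weakly conformal at every point), let U ⊆ EuclideanSpace ℂ (Fin n) be open, and let f : EuclideanSpace ℂ (Fin n) → ℂ be ±holomorphic on U. Then f ∘ φ is a harmonic morphism on φ⁻¹(U): it is harmonic on φ⁻¹(U) and for every x ∈ φ⁻¹(U), ∑_{i ∈ Fin m} (fderiv ℝ (f ∘ φ) x (e i))^2 = 0, i.e. f ∘ φ is horizontally weakly conformal at every point of φ⁻¹(U). -/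
/-!
For holomorphic `f` the chain rule gives, at a point `x` of `φ ⁻¹' U`,
`d(f ∘ φ)(e) = df(dφ e)` and `D²(f ∘ φ)(e, e) = D²f(dφ e, dφ e) + df(D²φ(e, e))`.
Here `df` is `ℂ`-linear and `D²f` is `ℂ`-bilinear. Expanding `dφ e i` in the standard basis of `ℂⁿ`
and summing over `i`, every `ℂ`-bilinear form in `(dφ e i, dφ e i)` sums to zero by PHWC
(`sum_bilin_eq_zero`); this applies to both `D²f` and `df ⊗ df`. The remaining term
`df (∑ i, D²φ(e i, e i))` vanishes because `φ` is harmonic. The antiholomorphic case follows by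
composing with complex conjugation.

The second-order chain rule needs `df` to be differentiable, for `f` assumed only once complex
differentiable in several variables. This is `differentiableAt_fderiv_of_holomorphic`: each
directional derivative is a Cauchy integral over a circle in a complex line, which may be
differentiated under the integral sign because `df` is locally bounded by the Schwarz lemma.
-/

open scoped InnerProductSpace
open Module

noncomputable def stdBasis (m : ℕ) (i : Fin m) : EuclideanSpace ℝ (Fin m) :=
  EuclideanSpace.single i (1 : ℝ)

/-- Pseudo horizontal weak conformality at a point. -/
def PHWCAt {m n : ℕ} (φ : EuclideanSpace ℝ (Fin m) → EuclideanSpace ℂ (Fin n))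
    (x : EuclideanSpace ℝ (Fin m)) : Prop :=
  ∀ α β : Fin n,
    ∑ i : Fin m, (fderiv ℝ φ x (stdBasis m i)) α * (fderiv ℝ φ x (stdBasis m i)) β = 0

/-- A map into a real normed space is harmonic on `S` if its Laplacian
(the trace of its second derivative over the standard orthonormal basis) vanishes on `S`. -/
def HarmonicOn {m : ℕ} {E : Type*} [NormedAddCommGroup E] [NormedSpace ℝ E]
    (ψ : EuclideanSpace ℝ (Fin m) → E) (S : Set (EuclideanSpace ℝ (Fin m))) : Prop :=
  ∀ x ∈ S, ∑ i : Fin m, iteratedFDeriv ℝ 2 ψ x ![stdBasis m i, stdBasis m i] = 0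

/-- A ℂ-valued function is ±holomorphic on `U` if it or its complex conjugate is
holomorphic on `U`. -/
def PMHolomorphicFnOn {n : ℕ} (f : EuclideanSpace ℂ (Fin n) → ℂ)
    (U : Set (EuclideanSpace ℂ (Fin n))) : Prop :=
  DifferentiableOn ℂ f U ∨ DifferentiableOn ℂ (fun z => starRingEnd ℂ (f z)) U

open Metric Set Filter Topology MeasureTheory

/-- A directional derivative of a holomorphic function of several variables is complex
differentiable: differentiate `(2πi)⁻¹ ∮ f (z + t v) / t² dt` in `z` under the integral sign. -/
lemma differentiableAt_fderiv_apply_of_holomorphic {n : ℕ}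
    {f : EuclideanSpace ℂ (Fin n) → ℂ} {U : Set (EuclideanSpace ℂ (Fin n))} (hU : IsOpen U)
    (hf : DifferentiableOn ℂ f U) {z₀ : EuclideanSpace ℂ (Fin n)} (hz₀ : z₀ ∈ U)
    (v : EuclideanSpace ℂ (Fin n)) :
    DifferentiableAt ℂ (fun z => fderiv ℂ f z v) z₀ := by
  have hcont : ContinuousAt f z₀ := (hf.differentiableAt (hU.mem_nhds hz₀)).continuousAt
  obtain ⟨ρ, hρ, hball⟩ : ∃ ρ > 0, ball z₀ ρ ⊆ U ∩ f ⁻¹' ball (f z₀) 1 :=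
    Metric.mem_nhds_iff.1 (inter_mem (hU.mem_nhds hz₀) (hcont (ball_mem_nhds _ one_pos)))
  obtain ⟨r, hr, rfl⟩ : ∃ r > 0, ρ = 4 * r := ⟨ρ / 4, by positivity, by ring⟩
  have hdiff : ∀ w ∈ ball z₀ (4 * r), DifferentiableAt ℂ f w := fun w hw =>
    hf.differentiableAt (hU.mem_nhds (hball hw).1)
  -- the Schwarz lemma on `ball w (2 * r)`, where `f` stays within distance `2` of `f w`
  have hbound : ∀ w ∈ ball z₀ (2 * r), ‖fderiv ℂ f w‖ ≤ 2 / (2 * r) := by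
    intro w hw
    have hsub : ball w (2 * r) ⊆ ball z₀ (4 * r) := by
      apply ball_subset_ball'
      rw [mem_ball] at hw
      linarith
    refine Complex.norm_fderiv_le_div_of_mapsTo_ball
      (fun y hy => (hdiff y (hsub hy)).differentiableWithinAt) ?_ (by positivity)
    intro y hy
    have h1 : dist (f y) (f z₀) < 1 := (hball (hsub hy)).2
    have h2 : dist (f w) (f z₀) < 1 :=
      (hball (hsub (mem_ball_self (by positivity)))).2
    rw [mem_closedBall]
    linarith [dist_triangle_right (f y) (f w) (f z₀)]
  obtain ⟨R, hR, hRv⟩ : ∃ R > 0, R * ‖v‖ < r := by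
    refine ⟨r / (‖v‖ + 1), by positivity, ?_⟩
    rw [div_mul_eq_mul_div, div_lt_iff₀ (by positivity)]
    nlinarith [norm_nonneg v]
  have hmem : ∀ z ∈ ball z₀ r, ∀ t ∈ closedBall (0 : ℂ) R, z + t • v ∈ ball z₀ (2 * r) := by
    intro z hz t ht
    rw [mem_ball, dist_eq_norm] at hz ⊢
    rw [mem_closedBall, dist_zero_right] at ht
    calc ‖z + t • v - z₀‖ = ‖(z - z₀) + t • v‖ := by congr 1; abel
      _ ≤ ‖z - z₀‖ + ‖t‖ * ‖v‖ := (norm_add_le _ _).trans (by rw [norm_smul])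
      _ < 2 * r := by nlinarith [norm_nonneg v, mul_le_mul_of_nonneg_right ht (norm_nonneg v)]
  have h24 : ball z₀ (2 * r) ⊆ ball z₀ (4 * r) := ball_subset_ball (by linarith)
  have hcirc : ∀ θ : ℝ, circleMap 0 R θ ∈ closedBall (0 : ℂ) R := fun θ =>
    circleMap_mem_closedBall 0 hR.le θ
  set c : ℝ → ℂ := fun θ => deriv (circleMap 0 R) θ * (1 / (circleMap 0 R θ - 0) ^ 2) with hc
  have hne : ∀ θ : ℝ, circleMap 0 R θ ≠ 0 := fun θ => circleMap_ne_center hR.ne'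
  have hc_cont : Continuous c := by
    simp only [hc, deriv_circleMap, sub_zero]
    have := continuous_circleMap 0 R
    refine (by fun_prop : Continuous fun θ => circleMap 0 R θ * Complex.I).mul
      (continuous_const.div (by fun_prop) fun θ => pow_ne_zero 2 (hne θ))
  have hcauchy : ∀ z ∈ ball z₀ r,
      fderiv ℂ f z v = (2 * Real.pi * Complex.I)⁻¹ •
        ∫ θ in (0 : ℝ)..2 * Real.pi, c θ • f (z + circleMap 0 R θ • v) := by
    intro z hz
    have hline : ∀ t : ℂ, HasDerivAt (fun t : ℂ => z + t • v) v t := fun t => by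
      simpa using ((hasDerivAt_id t).smul_const v).const_add z
    have hd : DifferentiableOn ℂ (fun t : ℂ => f (z + t • v)) (closedBall 0 R) := fun t ht =>
      ((hdiff _ (h24 (hmem z hz t ht))).comp t
        (hline t).differentiableAt).differentiableWithinAt
    have h0 : HasFDerivAt f (fderiv ℂ f z) (z + (0 : ℂ) • v) := by
      have := (hdiff z (ball_subset_ball (by linarith) hz)).hasFDerivAt
      simpa using this
    have hderiv : deriv (fun t : ℂ => f (z + t • v)) 0 = fderiv ℂ f z v :=
      (h0.comp_hasDerivAt (0 : ℂ) (hline 0)).deriv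
    have key := DifferentiableOn.deriv_eq_smul_circleIntegral hR hd
    rw [hderiv] at key
    rw [eq_inv_smul_iff₀ Complex.two_pi_I_ne_zero, ← key, circleIntegral]
    simp only [hc, smul_eq_mul, mul_assoc]
  have hcontF : ∀ z ∈ ball z₀ r, Continuous fun θ : ℝ => c θ • f (z + circleMap 0 R θ • v) := by
    intro z hz
    refine hc_cont.smul (continuous_iff_continuousAt.2 fun θ => ?_)
    refine ContinuousAt.comp (f := fun θ : ℝ => z + circleMap 0 R θ • v)
      (hdiff _ (h24 (hmem z hz _ (hcirc θ)))).continuousAt ?_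
    have := continuous_circleMap 0 R
    exact (by fun_prop : Continuous fun θ : ℝ => z + circleMap 0 R θ • v).continuousAt
  have hint := (intervalIntegral.hasFDerivAt_integral_of_dominated_of_fderiv_le
    (𝕜 := ℂ) (μ := volume) (a := 0) (b := 2 * Real.pi) (x₀ := z₀) (s := ball z₀ r)
    (F := fun z θ => c θ • f (z + circleMap 0 R θ • v))
    (F' := fun z θ => c θ • fderiv ℂ f (z + circleMap 0 R θ • v))
    (bound := fun θ => ‖c θ‖ * (2 / (2 * r)))
    (ball_mem_nhds _ hr)
    (by
      filter_upwards [ball_mem_nhds z₀ hr] with z hz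
      exact (hcontF z hz).aestronglyMeasurable)
    ((hcontF z₀ (mem_ball_self hr)).intervalIntegrable _ _)
    (by
      have := continuous_circleMap 0 R
      have hm : Measurable fun θ : ℝ => fderiv ℂ f (z₀ + circleMap 0 R θ • v) :=
        (measurable_fderiv ℂ f).comp
          (by fun_prop : Continuous fun θ : ℝ => z₀ + circleMap 0 R θ • v).measurable
      exact hc_cont.aestronglyMeasurable.smul hm.aestronglyMeasurable)
    (by
      refine Eventually.of_forall fun θ _ z hz => ?_
      rw [norm_smul]
      exact mul_le_mul_of_nonneg_left (hbound _ (hmem z hz _ (hcirc θ))) (norm_nonneg _))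
    ((hc_cont.norm.mul continuous_const).intervalIntegrable _ _)
    (by
      refine Eventually.of_forall fun θ _ z hz => ?_
      have h := (hdiff _ (h24 (hmem z hz _ (hcirc θ)))).hasFDerivAt
      exact ((hasFDerivAt_comp_add_right (circleMap 0 R θ • v)).2 h).const_smul (c θ)))
  refine (hint.differentiableAt.const_smul ((2 * Real.pi * Complex.I : ℂ)⁻¹)).congr_of_eventuallyEq
    ?_
  filter_upwards [ball_mem_nhds z₀ hr] with z hz using hcauchy z hz

lemma differentiableAt_fderiv_of_holomorphic {n : ℕ}
    {f : EuclideanSpace ℂ (Fin n) → ℂ} {U : Set (EuclideanSpace ℂ (Fin n))} (hU : IsOpen U)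
    (hf : DifferentiableOn ℂ f U) {z₀ : EuclideanSpace ℂ (Fin n)} (hz₀ : z₀ ∈ U) :
    DifferentiableAt ℂ (fderiv ℂ f) z₀ := by
  have hsum : fderiv ℂ f = fun z => ∑ α : Fin n,
      (fderiv ℂ f z (EuclideanSpace.single α 1)) •
        (EuclideanSpace.proj α : EuclideanSpace ℂ (Fin n) →L[ℂ] ℂ) := by
    funext z
    refine ContinuousLinearMap.ext fun w => ?_
    conv_lhs => rw [← (EuclideanSpace.basisFun (Fin n) ℂ).sum_repr w]
    simp [mul_comm]
  rw [hsum]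
  exact DifferentiableAt.fun_sum fun α _ =>
    (differentiableAt_fderiv_apply_of_holomorphic hU hf hz₀ _).smul_const _

/-- PHWC says that the symmetric tensor `∑ i, dφ (e i) ⊗ dφ (e i)` over `ℂ` vanishes, so every
complex bilinear form is killed by it. -/
lemma sum_bilin_eq_zero {m n : ℕ} {φ : EuclideanSpace ℝ (Fin m) → EuclideanSpace ℂ (Fin n)}
    {x : EuclideanSpace ℝ (Fin m)} (h : PHWCAt φ x)
    (B : EuclideanSpace ℂ (Fin n) →L[ℂ] EuclideanSpace ℂ (Fin n) →L[ℂ] ℂ) :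
    ∑ i : Fin m, B (fderiv ℝ φ x (stdBasis m i)) (fderiv ℝ φ x (stdBasis m i)) = 0 := by
  have hB : ∀ w : EuclideanSpace ℂ (Fin n), B w w = ∑ α : Fin n, ∑ β : Fin n,
      B (EuclideanSpace.single α 1) (EuclideanSpace.single β 1) * (w α * w β) := by
    intro w
    conv_lhs => rw [← (EuclideanSpace.basisFun (Fin n) ℂ).sum_repr w]
    simp only [map_sum, map_smul, _root_.sum_apply, _root_.smul_apply,
      EuclideanSpace.basisFun_apply, EuclideanSpace.basisFun_repr, smul_eq_mul, Finset.mul_sum]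
    rw [Finset.sum_comm]
    refine Finset.sum_congr rfl fun α _ => Finset.sum_congr rfl fun β _ => ?_
    ring
  simp only [hB]
  rw [Finset.sum_comm]
  refine Finset.sum_eq_zero fun α _ => ?_
  rw [Finset.sum_comm]
  refine Finset.sum_eq_zero fun β _ => ?_
  rw [← Finset.mul_sum, h α β, mul_zero]

lemma harmonicMorphism_comp_of_holomorphic {m n : ℕ}
    {φ : EuclideanSpace ℝ (Fin m) → EuclideanSpace ℂ (Fin n)}
    (hC2 : ContDiff ℝ 2 φ) (hharm : HarmonicOn φ Set.univ) (hphwc : ∀ x, PHWCAt φ x)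
    {U : Set (EuclideanSpace ℂ (Fin n))} (hU : IsOpen U)
    {f : EuclideanSpace ℂ (Fin n) → ℂ} (hf : DifferentiableOn ℂ f U) :
    HarmonicOn (f ∘ φ) (φ ⁻¹' U) ∧
      ∀ x ∈ φ ⁻¹' U, ∑ i : Fin m, (fderiv ℝ (f ∘ φ) x (stdBasis m i)) ^ 2 = 0 := by
  have hφ : Differentiable ℝ φ := hC2.differentiable (by norm_num)
  have hφ' : Differentiable ℝ (fderiv ℝ φ) :=
    (hC2.fderiv_right (m := 1) (by norm_num)).differentiable (by norm_num)
  have hchain : ∀ x ∈ φ ⁻¹' U, fderiv ℝ (f ∘ φ) x =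
      ((fderiv ℂ f (φ x)).restrictScalars ℝ).comp (fderiv ℝ φ x) := fun x hx =>
    (((hf.differentiableAt (hU.mem_nhds hx)).hasFDerivAt.restrictScalars ℝ).comp x
      (hφ x).hasFDerivAt).fderiv
  refine ⟨fun x hx => ?_, fun x hx => ?_⟩
  · have hev : fderiv ℝ (f ∘ φ) =ᶠ[𝓝 x] fun y =>
        (ContinuousLinearMap.restrictScalarsL ℂ (EuclideanSpace ℂ (Fin n)) ℂ ℝ ℝ
          (fderiv ℂ f (φ y))).comp (fderiv ℝ φ y) := by
      filter_upwards [(hU.preimage hφ.continuous).mem_nhds hx] with y hy using hchain y hy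
    have hD : HasFDerivAt (fun y => fderiv ℂ f (φ y)) _ x :=
      ((differentiableAt_fderiv_of_holomorphic hU hf hx).hasFDerivAt.restrictScalars ℝ).comp x
        (hφ x).hasFDerivAt
    have hG := (ContinuousLinearMap.restrictScalarsL ℂ
      (EuclideanSpace ℂ (Fin n)) ℂ ℝ ℝ).hasFDerivAt.comp x hD
    have hsecond := (hG.clm_comp (hφ' x).hasFDerivAt).fderiv
    have hterm : ∀ e, iteratedFDeriv ℝ 2 (f ∘ φ) x ![e, e] =
        fderiv ℂ (fderiv ℂ f) (φ x) (fderiv ℝ φ x e) (fderiv ℝ φ x e) +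
          fderiv ℂ f (φ x) (iteratedFDeriv ℝ 2 φ x ![e, e]) := by
      intro e
      rw [iteratedFDeriv_two_apply, iteratedFDeriv_two_apply, hev.fderiv_eq]
      refine (congrArg (fun L => L e e) hsecond).trans ?_
      simp [add_comm]
    simp only [hterm]
    rw [Finset.sum_add_distrib, sum_bilin_eq_zero (hphwc x), ← map_sum, hharm x (mem_univ x),
      map_zero, add_zero]
  · have h := sum_bilin_eq_zero (hphwc x)
      ((fderiv ℂ f (φ x)).smulRight (fderiv ℂ f (φ x)))
    rw [← h]
    refine Finset.sum_congr rfl fun i _ => ?_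
    rw [hchain x hx]
    simp [sq]

theorem stmt6 (m n : ℕ) (φ : EuclideanSpace ℝ (Fin m) → EuclideanSpace ℂ (Fin n))
    (hC2 : ContDiff ℝ 2 φ) (hharm : HarmonicOn φ Set.univ) (hphwc : ∀ x, PHWCAt φ x)
    (U : Set (EuclideanSpace ℂ (Fin n))) (hU : IsOpen U)
    (f : EuclideanSpace ℂ (Fin n) → ℂ) (hf : PMHolomorphicFnOn f U) :
    HarmonicOn (f ∘ φ) (φ ⁻¹' U) ∧
      ∀ x ∈ φ ⁻¹' U, ∑ i : Fin m, (fderiv ℝ (f ∘ φ) x (stdBasis m i)) ^ 2 = 0 := by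
  rcases hf with hf | hf
  · exact harmonicMorphism_comp_of_holomorphic hC2 hharm hphwc hU hf
  · obtain ⟨h1, h2⟩ := harmonicMorphism_comp_of_holomorphic hC2 hharm hphwc hU hf
    have hconj : f ∘ φ = Complex.conjCLE ∘ ((fun z => starRingEnd ℂ (f z)) ∘ φ) := by
      funext x
      simp
    rw [hconj]
    refine ⟨fun x hx => ?_, fun x hx => ?_⟩
    · simp only [ContinuousLinearEquiv.iteratedFDeriv_comp_left,
        ContinuousLinearMap.compContinuousMultilinearMap_coe, Function.comp_apply]
      rw [← map_sum, h1 x hx, map_zero]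
    · have h := congrArg (starRingEnd ℂ) (h2 x hx)
      rw [map_sum, map_zero] at h
      rw [← h]
      refine Finset.sum_congr rfl fun i _ => ?_
      rw [ContinuousLinearEquiv.comp_fderiv, map_pow]
      simp
end

section
/- Let φ : EuclideanSpace ℝ (Fin m) → EuclideanSpace ℂ (Fin n) be C². Then φ is a pseudo harmonic morphism (harmonic and pseudo horizontally weakly conformal at every point) if and only if for every p, every open set U ⊆ EuclideanSpace ℂ (Fin n), and every map ψ : EuclideanSpace ℂ (Fin n) → EuclideanSpace ℂ (Fin p) that is ±holomorphic on U, the composition ψ ∘ φ is harmonic on φ⁻¹(U) and pseudo horizontally weakly conformal at every point of φ⁻¹(U). -/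
/-!
Taking `ψ = id` on the whole space gives the reverse implication.

For the forward implication with `ψ` holomorphic, the chain rule gives
`Δ(ψ ∘ φ) = ∑ i, D²ψ (dφ eᵢ) (dφ eᵢ) + dψ (Δφ)` and, for each pair of components,
`∑ i, d(ψ ∘ φ)_α eᵢ * d(ψ ∘ φ)_β eᵢ = ∑ i, dψ_α (dφ eᵢ) * dψ_β (dφ eᵢ)`. Both `D²ψ` and
`dψ_α · dψ_β` are complex-bilinear, so their traces along the vectors `dφ eᵢ` are linear
combinations of the sums that vanish by PHWC (`sum_bilin_eq_zero`, `holomorphic_comp`). The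
antiholomorphic case follows because componentwise conjugation is real-linear, hence commutes with
the Laplacian and conjugates the PHWC sums.

The chain rule needs `ψ` to be twice continuously differentiable, whereas holomorphy is only
complex differentiability on an open subset of `ℂⁿ`. Regularity is obtained from Cauchy's formula
on complex lines: directional derivatives of a holomorphic map are again holomorphic
(`differentiableOn_fderiv_apply`), and induction gives `C^k` for all finite `k`
(`contDiffOn_of_differentiableOn_complex`).
-/

open scoped InnerProductSpace
open Module

/-- A map between complex Euclidean spaces is ±holomorphic on `U` if it or its componentwise
complex conjugate is holomorphic on `U`. -/
def PMHolomorphicOn {n p : ℕ} (ψ : EuclideanSpace ℂ (Fin n) → EuclideanSpace ℂ (Fin p))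
    (U : Set (EuclideanSpace ℂ (Fin n))) : Prop :=
  DifferentiableOn ℂ ψ U ∨
    DifferentiableOn ℂ
      (fun z => (WithLp.equiv 2 (Fin p → ℂ)).symm fun a => starRingEnd ℂ (ψ z a)) U

open Metric Filter Topology MeasureTheory

section Osgood

variable {E F : Type*} [NormedAddCommGroup E] [NormedSpace ℂ E] [FiniteDimensional ℂ E]
  [NormedAddCommGroup F] [NormedSpace ℂ F] [FiniteDimensional ℂ F]

/-- On an open set, a directional derivative of a holomorphic map of several complex variables is
again holomorphic. Near a given point it equals a Cauchy integral over a fixed small circle in the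
complex line spanned by `v`, and this integral may be differentiated under the integral sign. -/
theorem differentiableOn_fderiv_apply {f : E → F} {U : Set E} (hU : IsOpen U)
    (hf : DifferentiableOn ℂ f U) (v : E) :
    DifferentiableOn ℂ (fun z => fderiv ℂ f z v) U := by
  intro z₀ hz₀
  apply DifferentiableAt.differentiableWithinAt
  have : CompleteSpace F := FiniteDimensional.complete ℂ F
  have : ProperSpace (E →L[ℂ] F) := FiniteDimensional.proper ℂ _
  borelize E
  borelize (E →L[ℂ] F)
  have hcont : ContinuousAt f z₀ := (hf.differentiableAt (hU.mem_nhds hz₀)).continuousAt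
  obtain ⟨ρ, hρ, hball⟩ : ∃ ρ > 0, ball z₀ ρ ⊆ U ∩ f ⁻¹' ball (f z₀) 1 :=
    Metric.mem_nhds_iff.1 (inter_mem (hU.mem_nhds hz₀)
      (hcont.preimage_mem_nhds (ball_mem_nhds _ one_pos)))
  obtain ⟨R, hR, rfl⟩ : ∃ R > 0, ρ = 4 * R := ⟨ρ / 4, by positivity, by ring⟩
  obtain ⟨r, hr, hrv⟩ : ∃ r > 0, r * ‖v‖ < R := by
    refine ⟨R / (‖v‖ + 1), by positivity, ?_⟩
    rw [div_mul_eq_mul_div, div_lt_iff₀ (by positivity)]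
    nlinarith [norm_nonneg v]
  have hmem : ∀ z ∈ ball z₀ R, ∀ ζ : ℂ, ‖ζ‖ ≤ r → z + ζ • v ∈ ball z₀ (2 * R) := by
    intro z hz ζ hζ
    rw [mem_ball_iff_norm] at hz ⊢
    calc ‖z + ζ • v - z₀‖ = ‖(z - z₀) + ζ • v‖ := by congr 1; abel
      _ ≤ ‖z - z₀‖ + ‖ζ‖ * ‖v‖ := (norm_add_le _ _).trans_eq (by rw [norm_smul])
      _ ≤ ‖z - z₀‖ + r * ‖v‖ := by gcongr
      _ < 2 * R := by linarith
  have hsub : ball z₀ (2 * R) ⊆ U := fun w hw =>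
    (hball (ball_subset_ball (by linarith) hw)).1
  have hdiff : ∀ w ∈ ball z₀ (2 * R), DifferentiableAt ℂ f w := fun w hw =>
    hf.differentiableAt (hU.mem_nhds (hsub hw))
  -- the Schwarz lemma on balls of radius `2 * R` bounds the derivative on `ball z₀ (2 * R)`
  have hbd : ∀ w ∈ ball z₀ (2 * R), ‖fderiv ℂ f w‖ ≤ 2 / (2 * R) := by
    intro w hw
    have hsub' : ball w (2 * R) ⊆ ball z₀ (4 * R) :=
      ball_subset_ball' (by rw [mem_ball] at hw; linarith)
    refine Complex.norm_fderiv_le_div_of_mapsTo_ball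
      (hf.mono fun y hy => (hball (hsub' hy)).1) (fun y hy => ?_) (by positivity)
    have h1 : dist (f y) (f z₀) < 1 := (hball (hsub' hy)).2
    have h2 : dist (f w) (f z₀) < 1 := (hball (hsub' (mem_ball_self (by positivity)))).2
    rw [mem_closedBall]
    linarith [dist_triangle_right (f y) (f w) (f z₀)]
  -- the kernel `ζ⁻² dζ` on the circle of radius `r`
  let k : ℝ → ℂ := fun θ => deriv (circleMap 0 r) θ * (1 / (circleMap 0 r θ - 0) ^ 2)
  have hk : Continuous k := by
    have h0 : ∀ θ, (circleMap 0 r θ - 0) ^ 2 ≠ 0 := fun θ => by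
      simpa using (circleMap_ne_center hr.ne' (c := 0) (θ := θ))
    simp only [k, deriv_circleMap]
    have := continuous_circleMap 0 r
    fun_prop (disch := exact h0 _)
  have hcm : ∀ θ, ‖circleMap 0 r θ‖ ≤ r := fun θ => by simp [abs_of_pos hr]
  have hcirc : ∀ z ∈ ball z₀ R, Continuous fun θ => f (z + circleMap 0 r θ • v) := by
    intro z hz
    rw [continuous_iff_continuousAt]
    intro θ
    have h1 := (hdiff _ (hmem z hz _ (hcm θ))).continuousAt
    have h2 : ContinuousAt (fun θ => z + circleMap 0 r θ • v) θ := by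
      have := continuous_circleMap 0 r
      fun_prop
    exact ContinuousAt.comp (f := fun θ => z + circleMap 0 r θ • v) h1 h2
  -- Cauchy's formula for the derivative of `ζ ↦ f (z + ζ • v)` at `0`
  have hcauchy : ∀ z ∈ ball z₀ R, fderiv ℂ f z v =
      (2 * Real.pi * Complex.I : ℂ)⁻¹ •
        ∫ θ in (0 : ℝ)..2 * Real.pi, k θ • f (z + circleMap 0 r θ • v) := by
    intro z hz
    have hline : ∀ ζ : ℂ, ‖ζ‖ ≤ r →
        HasDerivAt (fun ζ : ℂ => f (z + ζ • v)) (fderiv ℂ f (z + ζ • v) v) ζ := by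
      intro ζ hζ
      have h := (hdiff _ (hmem z hz ζ hζ)).hasFDerivAt
      have h2 : HasDerivAt (fun ζ : ℂ => z + ζ • v) v ζ := by
        simpa using ((hasDerivAt_id ζ).smul_const v).const_add z
      exact h.comp_hasDerivAt ζ h2
    have h := DifferentiableOn.deriv_eq_smul_circleIntegral (c := 0)
      (f := fun ζ : ℂ => f (z + ζ • v)) hr
      (fun ζ hζ => (hline ζ (by simpa using hζ)).differentiableAt.differentiableWithinAt)
    rw [(hline 0 (by simpa using hr.le)).deriv, circleIntegral] at h
    simp only [zero_smul, add_zero] at h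
    rw [eq_inv_smul_iff₀ Complex.two_pi_I_ne_zero, ← h]
    simp only [k, mul_smul]
  have hint := intervalIntegral.hasFDerivAt_integral_of_dominated_of_fderiv_le (𝕜 := ℂ)
    (μ := volume) (a := 0) (b := 2 * Real.pi)
    (F := fun z θ => k θ • f (z + circleMap 0 r θ • v))
    (F' := fun z θ => k θ • fderiv ℂ f (z + circleMap 0 r θ • v))
    (bound := fun θ => ‖k θ‖ * (2 / (2 * R))) (ball_mem_nhds z₀ hR)
    (by
      filter_upwards [ball_mem_nhds z₀ hR] with z hz
      exact (hk.smul (hcirc z hz)).aestronglyMeasurable)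
    ((hk.smul (hcirc z₀ (mem_ball_self hR))).intervalIntegrable _ _)
    (by
      have hm : Measurable fun θ : ℝ => z₀ + circleMap 0 r θ • v := by
        apply Continuous.measurable
        have := continuous_circleMap 0 r
        fun_prop
      exact (hk.measurable.aestronglyMeasurable).smul
        ((measurable_fderiv ℂ f).comp hm).aestronglyMeasurable)
    (by
      refine Eventually.of_forall fun θ _ z hz => ?_
      rw [norm_smul]
      gcongr
      exact hbd _ (hmem z hz _ (hcm θ)))
    ((by fun_prop : Continuous fun θ => ‖k θ‖ * (2 / (2 * R))).intervalIntegrable _ _)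
    (by
      refine Eventually.of_forall fun θ _ z hz => ?_
      have h := (hdiff _ (hmem z hz _ (hcm θ))).hasFDerivAt
      have hadd : HasFDerivAt (fun z : E => z + circleMap 0 r θ • v) (.id ℂ E) z :=
        (hasFDerivAt_id z).add_const _
      exact (h.comp z hadd).const_smul _)
  refine (hint.differentiableAt.const_smul
    (2 * Real.pi * Complex.I : ℂ)⁻¹).congr_of_eventuallyEq ?_
  filter_upwards [ball_mem_nhds z₀ hR] with z hz using hcauchy z hz

/-- Complex differentiable maps on an open subset of a finite-dimensional complex space are
continuously differentiable to every finite order. -/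
theorem contDiffOn_of_differentiableOn_complex {U : Set E} (hU : IsOpen U) (k : ℕ) :
    ∀ {f : E → F}, DifferentiableOn ℂ f U → ContDiffOn ℂ k f U := by
  induction k with
  | zero => exact fun hf => contDiffOn_zero.2 hf.continuousOn
  | succ k ih =>
    intro f hf
    push_cast
    rw [contDiffOn_succ_iff_fderiv_of_isOpen hU]
    refine ⟨hf, by simp, contDiffOn_clm_apply.2 fun v => ih ?_⟩
    exact differentiableOn_fderiv_apply hU hf v

end Osgood

section Composition

variable {m n p : ℕ}

/-- If the vectors `a i` satisfy the quadratic PHWC relations, then the trace of every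
complex-bilinear map along them vanishes, since it is a combination of the sums
`∑ i, a i α * a i β`. -/
theorem sum_bilin_eq_zero_s7 {F : Type*} [NormedAddCommGroup F] [NormedSpace ℂ F]
    (B : EuclideanSpace ℂ (Fin n) →L[ℂ] EuclideanSpace ℂ (Fin n) →L[ℂ] F)
    (a : Fin m → EuclideanSpace ℂ (Fin n))
    (ha : ∀ α β, ∑ i, a i α * a i β = 0) : ∑ i, B (a i) (a i) = 0 := by
  have hexp : ∀ z : EuclideanSpace ℂ (Fin n),
      z = ∑ α, z α • EuclideanSpace.single α (1 : ℂ) := fun z => by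
    ext β
    simp [Finset.sum_apply, Pi.single_apply]
  have hB : ∀ z, B z z = ∑ α, ∑ β, (z α * z β) •
      B (EuclideanSpace.single α 1) (EuclideanSpace.single β 1) := fun z => by
    conv_lhs => rw [hexp z]
    simp only [map_sum, map_smul, sum_apply, smul_apply,
      Finset.smul_sum, mul_smul]
    rw [Finset.sum_comm]
    refine Finset.sum_congr rfl fun α _ => Finset.sum_congr rfl fun β _ => ?_
    exact smul_comm _ _ _
  simp only [hB]
  rw [Finset.sum_comm]
  refine Finset.sum_eq_zero fun α _ => ?_
  rw [Finset.sum_comm]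
  refine Finset.sum_eq_zero fun β _ => ?_
  rw [← Finset.sum_smul, ha, zero_smul]

/-- Composition of a pseudo harmonic morphism with a holomorphic map. The Laplacian splits as
`∑ i, D²ψ (dφ eᵢ) (dφ eᵢ) + dψ (Δφ)`; the first sum vanishes by PHWC because `D²ψ` is
complex-bilinear, the second term by harmonicity. -/
theorem holomorphic_comp {φ : EuclideanSpace ℝ (Fin m) → EuclideanSpace ℂ (Fin n)}
    (hC2 : ContDiff ℝ 2 φ) (hharm : HarmonicOn φ Set.univ) (hphwc : ∀ x, PHWCAt φ x)
    {U : Set (EuclideanSpace ℂ (Fin n))} (hU : IsOpen U)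
    {ψ : EuclideanSpace ℂ (Fin n) → EuclideanSpace ℂ (Fin p)} (hψ : DifferentiableOn ℂ ψ U)
    {x : EuclideanSpace ℝ (Fin m)} (hx : φ x ∈ U) :
    ContDiffAt ℝ 2 (ψ ∘ φ) x ∧
    ∑ i : Fin m, iteratedFDeriv ℝ 2 (ψ ∘ φ) x ![stdBasis m i, stdBasis m i] = 0 ∧
    PHWCAt (ψ ∘ φ) x := by
  have hψ2 : ContDiffOn ℂ 2 ψ U := contDiffOn_of_differentiableOn_complex hU 2 hψ
  have hcd : ContDiffAt ℝ 2 (ψ ∘ φ) x :=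
    ((hψ2.contDiffAt (hU.mem_nhds hx)).restrict_scalars ℝ).comp x hC2.contDiffAt
  have hφd : ∀ y, HasFDerivAt φ (fderiv ℝ φ y) y := fun y =>
    (hC2.differentiable (by norm_num) y).hasFDerivAt
  have hchain : ∀ y, φ y ∈ U → fderiv ℝ (ψ ∘ φ) y =
      ((fderiv ℂ ψ (φ y)).restrictScalars ℝ).comp (fderiv ℝ φ y) := fun y hy =>
    (((hψ.differentiableAt (hU.mem_nhds hy)).hasFDerivAt.restrictScalars ℝ).comp y
      (hφd y)).fderiv
  refine ⟨hcd, ?_, ?_⟩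
  · set D := fderiv ℂ (fderiv ℂ ψ) (φ x) with hD
    have hDψ : HasFDerivAt (fderiv ℂ ψ) D (φ x) :=
      (((hψ2.contDiffAt (hU.mem_nhds hx)).fderiv_right (m := 1)
        (by norm_num)).differentiableAt (by norm_num)).hasFDerivAt
    have hφ2 : HasFDerivAt (fderiv ℝ φ) (fderiv ℝ (fderiv ℝ φ) x) x :=
      ((hC2.contDiffAt.fderiv_right (m := 1)
        (by norm_num)).differentiableAt (by norm_num)).hasFDerivAt
    have houter := (ContinuousLinearMap.restrictScalarsL ℂ (EuclideanSpace ℂ (Fin n))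
      (EuclideanSpace ℂ (Fin p)) ℝ ℝ).hasFDerivAt.comp x
        ((hDψ.restrictScalars ℝ).comp x (hφd x))
    have hfull := houter.clm_comp hφ2
    have heq : fderiv ℝ (ψ ∘ φ) =ᶠ[𝓝 x] fun y =>
        ((fderiv ℂ ψ (φ y)).restrictScalars ℝ).comp (fderiv ℝ φ y) := by
      filter_upwards [hC2.continuous.continuousAt.preimage_mem_nhds (hU.mem_nhds hx)] with y hy
        using hchain y hy
    have h2 := (hfull.congr_of_eventuallyEq heq).fderiv
    have hterm : ∀ v, iteratedFDeriv ℝ 2 (ψ ∘ φ) x ![v, v] =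
        D (fderiv ℝ φ x v) (fderiv ℝ φ x v) +
          fderiv ℂ ψ (φ x) (iteratedFDeriv ℝ 2 φ x ![v, v]) := fun v => by
      rw [iteratedFDeriv_two_apply, iteratedFDeriv_two_apply, h2]
      exact add_comm _ _
    simp only [hterm]
    rw [Finset.sum_add_distrib, ← map_sum, hharm x trivial, map_zero, add_zero]
    exact sum_bilin_eq_zero_s7 D _ (hphwc x)
  · intro α β
    rw [hchain x hx]
    let L := fderiv ℂ ψ (φ x)
    let pr : Fin p → EuclideanSpace ℂ (Fin p) →L[ℂ] ℂ := fun γ => EuclideanSpace.proj γ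
    exact sum_bilin_eq_zero_s7
      ((ContinuousLinearMap.mul ℂ ℂ).bilinearComp ((pr α).comp L) ((pr β).comp L))
      (fun i => fderiv ℝ φ x (stdBasis m i)) (hphwc x)

/-- Componentwise complex conjugation, as a real-linear isometry. -/
noncomputable def conjE (p : ℕ) : EuclideanSpace ℂ (Fin p) ≃ₗᵢ[ℝ] EuclideanSpace ℂ (Fin p) :=
  LinearIsometryEquiv.piLpCongrRight 2 fun _ => Complex.conjLIE

end Composition

theorem stmt7 (m n : ℕ) (φ : EuclideanSpace ℝ (Fin m) → EuclideanSpace ℂ (Fin n))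
    (hC2 : ContDiff ℝ 2 φ) :
    (HarmonicOn φ Set.univ ∧ ∀ x, PHWCAt φ x) ↔
      ∀ (p : ℕ) (U : Set (EuclideanSpace ℂ (Fin n)))
        (ψ : EuclideanSpace ℂ (Fin n) → EuclideanSpace ℂ (Fin p)),
        IsOpen U → PMHolomorphicOn ψ U →
        HarmonicOn (ψ ∘ φ) (φ ⁻¹' U) ∧ ∀ x ∈ φ ⁻¹' U, PHWCAt (ψ ∘ φ) x := by
  constructor
  · rintro ⟨hharm, hphwc⟩ p U ψ hU (hψ | hψ)
    · exact ⟨fun x hx => (holomorphic_comp hC2 hharm hphwc hU hψ hx).2.1,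
        fun x hx => (holomorphic_comp hC2 hharm hphwc hU hψ hx).2.2⟩
    · set χ : EuclideanSpace ℂ (Fin n) → EuclideanSpace ℂ (Fin p) :=
        fun z => (WithLp.equiv 2 (Fin p → ℂ)).symm fun a => starRingEnd ℂ (ψ z a) with hχ
      have hcomp : ψ ∘ φ = (conjE p).toContinuousLinearEquiv ∘ (χ ∘ φ) := by
        funext y
        ext a
        simp [hχ, conjE]
      have key := fun x hx => holomorphic_comp hC2 hharm hphwc hU hψ (x := x) hx
      rw [hcomp]
      refine ⟨fun x hx => ?_, fun x hx α β => ?_⟩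
      · have h := (key x hx).2.1
        simp only [ContinuousLinearEquiv.iteratedFDeriv_comp_left,
          ContinuousLinearMap.compContinuousMultilinearMap_coe, Function.comp_apply]
        rw [← map_sum, h, map_zero]
      · have h := (key x hx).2.2 α β
        rw [ContinuousLinearEquiv.comp_fderiv]
        have h' := congrArg (starRingEnd ℂ) h
        simpa [conjE, map_sum] using h'
  · intro h
    obtain ⟨h1, h2⟩ := h n Set.univ id isOpen_univ (Or.inl differentiableOn_id)
    exact ⟨h1, fun x => h2 x trivial⟩
end

section
/- Let φ : EuclideanSpace ℝ (Fin m) → EuclideanSpace ℂ (Fin n) be C², and suppose that for every open set U ⊆ EuclideanSpace ℂ (Fin n) and every pluriharmonic function f : EuclideanSpace ℂ (Fin n) → ℝ on U, the composition f ∘ φ is harmonic on φ⁻¹(U). Then φ is harmonic and pseudo horizontally weakly conformal at every point, i.e. φ is a pseudo harmonic morphism. -/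
/-!
Harmonicity of `f ∘ φ` is tested on real parts of two kinds of holomorphic functions: the coordinates
`w_α` and the products `w_α w_β`. If `P` is holomorphic, then `Re P` and `Re (-i P) = Im P` are
pluriharmonic, so the complex-valued function `P ∘ φ` is harmonic (`harmonicOn_holomorphic_comp`).
Coordinates give `Δ φ_α = 0`, that is, harmonicity of `φ`. Products, through the Leibniz rule
`Δ (u v) = u Δ v + v Δ u + 2 ∑ i, ∂ᵢu ∂ᵢv` (`iteratedFDeriv_two_mul_diag`), then give
`∑ i, ∂ᵢφ_α ∂ᵢφ_β = 0`, which is pseudo horizontal weak conformality.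
-/

open scoped InnerProductSpace
open Module

/-- A map from `ℂ` (identified with `ℝ²` via the basis `1, I`) into a real normed space is
harmonic on `T` if its Laplacian vanishes on `T`. -/
def HarmonicOnLine {E : Type*} [NormedAddCommGroup E] [NormedSpace ℝ E]
    (g : ℂ → E) (T : Set ℂ) : Prop :=
  ∀ z ∈ T,
    iteratedFDeriv ℝ 2 g z ![(1 : ℂ), (1 : ℂ)] +
      iteratedFDeriv ℝ 2 g z ![Complex.I, Complex.I] = 0

/-- A map, C² on the open set `U`, is pluriharmonic on `U` if its restriction to every
complex line (hence to every holomorphic curve) is harmonic. -/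
def PluriharmonicOn {n : ℕ} {E : Type*} [NormedAddCommGroup E] [NormedSpace ℝ E]
    (f : EuclideanSpace ℂ (Fin n) → E) (U : Set (EuclideanSpace ℂ (Fin n))) : Prop :=
  ContDiffOn ℝ 2 f U ∧
    ∀ a b : EuclideanSpace ℂ (Fin n),
      HarmonicOnLine (fun z : ℂ => f (a + z • b)) {z : ℂ | a + z • b ∈ U}

/-- The real part of a holomorphic function is pluriharmonic. -/
lemma pluriharmonicOn_re {n : ℕ} {P : EuclideanSpace ℂ (Fin n) → ℂ} (hP : ContDiff ℂ 2 P) :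
    PluriharmonicOn (fun w => (P w).re) Set.univ := by
  refine ⟨(Complex.reCLM.contDiff.comp (hP.restrict_scalars ℝ)).contDiffOn, fun a b z _ => ?_⟩
  have hline : ContDiff ℂ 2 (fun z : ℂ => P (a + z • b)) := hP.comp (by fun_prop)
  have hharm := (hline.contDiffAt (x := z)).harmonicAt.comp_CLM Complex.reCLM
  have hz := hharm.2.self_of_nhds
  rw [InnerProductSpace.laplacian_eq_iteratedFDeriv_complexPlane] at hz
  exact hz

/-- The Laplacian commutes with continuous linear maps of the target. -/
lemma sum_iteratedFDeriv_clm_comp {m : ℕ} {E F : Type*} [NormedAddCommGroup E] [NormedSpace ℝ E]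
    [NormedAddCommGroup F] [NormedSpace ℝ F] (L : E →L[ℝ] F)
    {u : EuclideanSpace ℝ (Fin m) → E} (hu : ContDiff ℝ 2 u) (x : EuclideanSpace ℝ (Fin m)) :
    ∑ i : Fin m, iteratedFDeriv ℝ 2 (fun y => L (u y)) x ![stdBasis m i, stdBasis m i] =
      L (∑ i : Fin m, iteratedFDeriv ℝ 2 u x ![stdBasis m i, stdBasis m i]) := by
  rw [map_sum]
  refine Finset.sum_congr rfl fun i _ => ?_
  have h := L.iteratedFDeriv_comp_left (hu.contDiffAt (x := x)) (i := 2) le_rfl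
  exact congrArg (fun T => T ![stdBasis m i, stdBasis m i]) h

/-- If `φ` pulls real pluriharmonic functions back to harmonic ones, it also pulls holomorphic
functions back to (complex-valued) harmonic ones: apply the hypothesis to `Re P` and `Re (-i P)`. -/
lemma harmonicOn_holomorphic_comp {m n : ℕ}
    {φ : EuclideanSpace ℝ (Fin m) → EuclideanSpace ℂ (Fin n)} (hC2 : ContDiff ℝ 2 φ)
    (hpull : ∀ (U : Set (EuclideanSpace ℂ (Fin n))), IsOpen U →
      ∀ f : EuclideanSpace ℂ (Fin n) → ℝ, PluriharmonicOn f U →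
        HarmonicOn (f ∘ φ) (φ ⁻¹' U))
    {P : EuclideanSpace ℂ (Fin n) → ℂ} (hP : ContDiff ℂ 2 P) :
    HarmonicOn (fun y => P (φ y)) Set.univ := by
  intro x _
  have key : ∀ {Q : EuclideanSpace ℂ (Fin n) → ℂ}, ContDiff ℂ 2 Q →
      (∑ i : Fin m, iteratedFDeriv ℝ 2 (fun y => Q (φ y)) x ![stdBasis m i, stdBasis m i]).re
        = 0 := by
    intro Q hQ
    have h := hpull Set.univ isOpen_univ _ (pluriharmonicOn_re hQ) x (Set.mem_univ _)
    have hu : ContDiff ℝ 2 (fun y => Q (φ y)) := (hQ.restrict_scalars ℝ).comp hC2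
    exact (sum_iteratedFDeriv_clm_comp Complex.reCLM hu x).symm.trans h
  have hu : ContDiff ℝ 2 (fun y => P (φ y)) := (hP.restrict_scalars ℝ).comp hC2
  have him := key (Q := fun w => -Complex.I * P w) (by fun_prop)
  have hmul := sum_iteratedFDeriv_clm_comp (ContinuousLinearMap.mul ℝ ℂ (-Complex.I)) hu x
  simp only [ContinuousLinearMap.mul_apply'] at hmul
  rw [hmul] at him
  refine Complex.ext (key hP) ?_
  simpa using him

/-- The Leibniz rule for the second derivative, on the diagonal. -/
lemma iteratedFDeriv_two_mul_diag {E : Type*} [NormedAddCommGroup E] [NormedSpace ℝ E]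
    {u v : E → ℂ} (hu : ContDiff ℝ 2 u) (hv : ContDiff ℝ 2 v) (x e : E) :
    iteratedFDeriv ℝ 2 (fun y => u y * v y) x ![e, e] =
      u x * iteratedFDeriv ℝ 2 v x ![e, e] + v x * iteratedFDeriv ℝ 2 u x ![e, e] +
        2 * (fderiv ℝ u x e * fderiv ℝ v x e) := by
  have du : Differentiable ℝ u := hu.differentiable (by norm_num)
  have dv : Differentiable ℝ v := hv.differentiable (by norm_num)
  have ddu : Differentiable ℝ (fderiv ℝ u) :=
    (hu.fderiv_right (m := 1) (by norm_num)).differentiable (by norm_num)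
  have ddv : Differentiable ℝ (fderiv ℝ v) :=
    (hv.fderiv_right (m := 1) (by norm_num)).differentiable (by norm_num)
  have h1 : fderiv ℝ (fun y => u y * v y) = fun y => u y • fderiv ℝ v y + v y • fderiv ℝ u y :=
    funext fun y => fderiv_fun_mul (du y) (dv y)
  have h2 := (((du x).hasFDerivAt.smul (ddv x).hasFDerivAt).add
    ((dv x).hasFDerivAt.smul (ddu x).hasFDerivAt)).fderiv
  simp only [iteratedFDeriv_two_apply, h1]
  erw [h2]
  simp
  ring

theorem stmt9 (m n : ℕ) (φ : EuclideanSpace ℝ (Fin m) → EuclideanSpace ℂ (Fin n))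
    (hC2 : ContDiff ℝ 2 φ)
    (hpull : ∀ (U : Set (EuclideanSpace ℂ (Fin n))), IsOpen U →
      ∀ f : EuclideanSpace ℂ (Fin n) → ℝ, PluriharmonicOn f U →
        HarmonicOn (f ∘ φ) (φ ⁻¹' U)) :
    HarmonicOn φ Set.univ ∧ ∀ x, PHWCAt φ x := by
  have coord : ∀ α : Fin n, HarmonicOn (fun y => φ y α) Set.univ := fun α =>
    harmonicOn_holomorphic_comp hC2 hpull (P := fun w => w α) (by fun_prop)
  have cC2 : ∀ α : Fin n, ContDiff ℝ 2 (fun y => φ y α) := fun α => by fun_prop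
  -- The coordinate `w ↦ w α` as a real-linear map.
  let L : Fin n → EuclideanSpace ℂ (Fin n) →L[ℝ] ℂ := fun α =>
    (EuclideanSpace.proj α : EuclideanSpace ℂ (Fin n) →L[ℂ] ℂ).restrictScalars ℝ
  refine ⟨fun x hx => ?_, fun x α β => ?_⟩
  · ext α
    exact (sum_iteratedFDeriv_clm_comp (L α) hC2 x).symm.trans (coord α x hx)
  · have hd : ∀ (γ : Fin n) (e : EuclideanSpace ℝ (Fin m)),
        fderiv ℝ (fun y => φ y γ) x e = (fderiv ℝ φ x e) γ := fun γ e => by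
      have h := (L γ).hasFDerivAt.comp x (hC2.differentiable (by norm_num) x).hasFDerivAt
      exact congrArg (fun T => T e) h.fderiv
    have hprod := harmonicOn_holomorphic_comp hC2 hpull (P := fun w => w α * w β)
      (by fun_prop) x (Set.mem_univ _)
    simp only [iteratedFDeriv_two_mul_diag (cC2 α) (cC2 β), Finset.sum_add_distrib,
      ← Finset.mul_sum, coord α x (Set.mem_univ _), coord β x (Set.mem_univ _), hd] at hprod
    simpa using hprod
end
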